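/- Let A and B be nonzero n×n matrices with nonnegative real entries, let g ∈ ℝ^n be nonnegative and h ∈ ℝ^n positive with g ≤ h (entrywise), and let α > 0, β > 0 be reals. Then there exists a positive vector x ∈ ℝ^n with g ≤ x ≤ h, max_{i,j} A_{ij}·x_j/x_i ≤ α and max_{i,j} B_{ij}·x_j/x_i ≤ β, if and only if α ≥ max(λ, γ) and β ≥ max( μ, δ, G(α) ). Here λ = max_{k=1,…,n} (tr(A^{⊗k}))^{1/k}, μ = max_{k=1,…,n} (tr(B^{⊗k}))^{1/k}, γ = max_{k=1,…,n−1} (h^− A^{⊗k} g)^{1/k}, δ = max_{k=1,…,n−1} (h^− B^{⊗k} g)^{1/k}, and G(s) = max( max_{k=1,…,n−1} max_{m=1,…,n−k} s^{−m/k}·(tr F_{km})^{1/k}, max_{k=1,…,n−2} max_{m=1,…,n−k−1} s^{−m/k}·(h^− F_{km} g)^{1/k} ) for s > 0, where F_{km} denotes the entrywise maximum, over all tuples of nonnegative integers (i_0, …, i_k) with i_0 + ⋯ + i_k = m, of the max-times products A^{⊗i_0} ⊗ B ⊗ A^{⊗i_1} ⊗ ⋯ ⊗ B ⊗ A^{⊗i_k}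 (with exactly k factors B). -/

import Mathlib

/-!
Put `C = max (A / α) (B / β)`. The two bounds on `x` say exactly that `C i j * x j ≤ x i` for
all `i, j`.

Necessity: the inequalities `A i j * x j ≤ α * x i` and `B i j * x j ≤ β * x i` multiply along
products, so each entry of `F_{km}` satisfies `F_{km} i j * x j ≤ α ^ m * β ^ k * x i`
(`mtF_sub`). On the diagonal this gives the trace bounds, and with `g ≤ x ≤ h` the bounds on
`h^- F_{km} g`.

Sufficiency: a power `C^{⊗L}` expands into scaled products of `k` factors `B` and `m` factors `A`
with `k + m = L` (`exists_chain`), so the hypotheses say that every cycle of `C` of length at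
most `n` has weight at most `1`, and that `C^{⊗L} i j * g j ≤ h i` for `L < n`. Any walk of
length at least `n` contains a cycle of length at most `n`; deleting it does not decrease the
weight (`exists_shorter`). Hence walks of length less than `n` already realise the Kleene star,
and `x j = min_{i, L < n} h i / C^{⊗L} i j` (over nonzero denominators) is a solution (`exists_subeigenvector`).
-/

open scoped BigOperators

/-- Max-times matrix product: `(A ⊗ B) i j = max_k A i k * B k j`. -/
noncomputable def mtMul {n : ℕ} (A B : Matrix (Fin n) (Fin n) ℝ) : Matrix (Fin n) (Fin n) ℝ :=
  fun i j => ⨆ k, A i k * B k j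

/-- Max-times matrix power, with `A^{⊗0}` the identity matrix. -/
noncomputable def mtPow {n : ℕ} (A : Matrix (Fin n) (Fin n) ℝ) : ℕ → Matrix (Fin n) (Fin n) ℝ
  | 0 => 1
  | k + 1 => mtMul A (mtPow A k)

/-- Tropical trace: `tr A = max_i A i i`. -/
noncomputable def mtTrace {n : ℕ} (A : Matrix (Fin n) (Fin n) ℝ) : ℝ :=
  ⨆ i, A i i

/-- The function `Tr(A) = max_{k=1,…,n} tr(A^{⊗k})`. -/
noncomputable def mtTr {n : ℕ} (A : Matrix (Fin n) (Fin n) ℝ) : ℝ :=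
  ⨆ k ∈ Finset.Icc 1 n, mtTrace (mtPow A k)

/-- Kleene star: entrywise maximum of `I, A, A^{⊗2}, …, A^{⊗(n-1)}`. -/
noncomputable def mtStar {n : ℕ} (A : Matrix (Fin n) (Fin n) ℝ) : Matrix (Fin n) (Fin n) ℝ :=
  fun i j => ⨆ k ∈ Finset.range n, mtPow A k i j

/-- Max-times matrix-vector product: `(A ⊗ x) i = max_j A i j * x j`. -/
noncomputable def mtVec {n : ℕ} (A : Matrix (Fin n) (Fin n) ℝ) (x : Fin n → ℝ) : Fin n → ℝ :=
  fun i => ⨆ j, A i j * x j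

/-- The alternating product `A^{⊗v 0} ⊗ B ⊗ A^{⊗v 1} ⊗ B ⊗ ⋯ ⊗ B ⊗ A^{⊗v k}`
(with exactly `k` factors `B`). -/
noncomputable def mtChain {n : ℕ} (A B : Matrix (Fin n) (Fin n) ℝ) :
    (k : ℕ) → (Fin (k + 1) → ℕ) → Matrix (Fin n) (Fin n) ℝ
  | 0, v => mtPow A (v 0)
  | k + 1, v => mtMul (mtPow A (v 0)) (mtMul B (mtChain A B k fun t => v t.succ))

/-- `F_{km}`: the entrywise maximum, over all tuples `(i_0,…,i_k)` of nonnegative integers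
with `i_0 + ⋯ + i_k = m`, of the products `A^{⊗i_0} ⊗ B ⊗ A^{⊗i_1} ⊗ ⋯ ⊗ B ⊗ A^{⊗i_k}`. -/
noncomputable def mtF {n : ℕ} (A B : Matrix (Fin n) (Fin n) ℝ) (k m : ℕ) :
    Matrix (Fin n) (Fin n) ℝ :=
  fun i j => ⨆ v : { v : Fin (k + 1) → ℕ // ∑ t, v t = m }, mtChain A B k v.1 i j

/-- `h^− M g = max_{i,j} M i j * g j / h i`. -/
noncomputable def mtHMG {n : ℕ} (h : Fin n → ℝ) (M : Matrix (Fin n) (Fin n) ℝ)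
    (g : Fin n → ℝ) : ℝ :=
  ⨆ i, ⨆ j, M i j * g j / h i

/-- Max-times spectral radius `λ = max_{k=1,…,n} (tr(A^{⊗k}))^{1/k}`. -/
noncomputable def mtSpecR {n : ℕ} (A : Matrix (Fin n) (Fin n) ℝ) : ℝ :=
  ⨆ k ∈ Finset.Icc 1 n, (mtTrace (mtPow A k)) ^ (1 / (k : ℝ))

/-- `γ = max_{k=1,…,n-1} (h^− A^{⊗k} g)^{1/k}`. -/
noncomputable def mtBnd {n : ℕ} (h : Fin n → ℝ) (A : Matrix (Fin n) (Fin n) ℝ)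
    (g : Fin n → ℝ) : ℝ :=
  ⨆ k ∈ Finset.Icc 1 (n - 1), (mtHMG h (mtPow A k) g) ^ (1 / (k : ℝ))

/-- The function `G`. -/
noncomputable def mtG {n : ℕ} (A B : Matrix (Fin n) (Fin n) ℝ) (h g : Fin n → ℝ)
    (s : ℝ) : ℝ :=
  max (⨆ k ∈ Finset.Icc 1 (n - 1), ⨆ m ∈ Finset.Icc 1 (n - k),
        s ^ (-(m : ℝ) / (k : ℝ)) * (mtTrace (mtF A B k m)) ^ (1 / (k : ℝ)))
      (⨆ k ∈ Finset.Icc 1 (n - 2), ⨆ m ∈ Finset.Icc 1 (n - k - 1),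
        s ^ (-(m : ℝ) / (k : ℝ)) * (mtHMG h (mtF A B k m) g) ^ (1 / (k : ℝ)))

/-- The function `H`. -/
noncomputable def mtH {n : ℕ} (A B : Matrix (Fin n) (Fin n) ℝ) (h g : Fin n → ℝ)
    (t : ℝ) : ℝ :=
  max (⨆ k ∈ Finset.Icc 1 (n - 1), ⨆ m ∈ Finset.Icc 1 (n - k),
        t ^ (-(k : ℝ) / (m : ℝ)) * (mtTrace (mtF A B k m)) ^ (1 / (m : ℝ)))
      (⨆ k ∈ Finset.Icc 1 (n - 2), ⨆ m ∈ Finset.Icc 1 (n - k - 1),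
        t ^ (-(k : ℝ) / (m : ℝ)) * (mtHMG h (mtF A B k m) g) ^ (1 / (m : ℝ)))

/-! ### Max-times linear algebra -/

section MaxTimes

variable {n : ℕ}

theorem fin_iSup_le_iff {ι : Type*} [Finite ι] [Nonempty ι] (f : ι → ℝ) (c : ℝ) :
    (⨆ i, f i) ≤ c ↔ ∀ i, f i ≤ c :=
  ciSup_le_iff (Set.finite_range f).bddAbove

theorem le_fin_iSup {ι : Type*} [Finite ι] (f : ι → ℝ) (i : ι) : f i ≤ ⨆ i, f i :=
  le_ciSup (Set.finite_range f).bddAbove i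

theorem mul_le_mtMul (M N : Matrix (Fin n) (Fin n) ℝ) (i k j : Fin n) :
    M i k * N k j ≤ mtMul M N i j :=
  le_fin_iSup (fun k => M i k * N k j) k

theorem exists_mtMul_eq (M N : Matrix (Fin n) (Fin n) ℝ) (i j : Fin n) :
    ∃ k, mtMul M N i j = M i k * N k j := by
  have : Nonempty (Fin n) := ⟨i⟩
  obtain ⟨k, hk⟩ := exists_eq_ciSup_of_finite (f := fun k => M i k * N k j)
  exact ⟨k, hk.symm⟩

theorem mtMul_nonneg {M N : Matrix (Fin n) (Fin n) ℝ} (hM : ∀ i j, 0 ≤ M i j)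
    (hN : ∀ i j, 0 ≤ N i j) (i j : Fin n) : 0 ≤ mtMul M N i j :=
  Real.iSup_nonneg fun k => mul_nonneg (hM i k) (hN k j)

theorem one_nonneg_apply (i j : Fin n) : 0 ≤ (1 : Matrix (Fin n) (Fin n) ℝ) i j := by
  rw [Matrix.one_apply]; split_ifs <;> norm_num

theorem mtMul_one_le {M : Matrix (Fin n) (Fin n) ℝ} (hM : ∀ i j, 0 ≤ M i j) (i j : Fin n) :
    mtMul 1 M i j ≤ M i j := by
  obtain ⟨k, hk⟩ := exists_mtMul_eq 1 M i j
  rw [hk, Matrix.one_apply]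
  split_ifs with h
  · rw [h, one_mul]
  · rw [zero_mul]; exact hM i j

theorem mtMul_mono {M N N' : Matrix (Fin n) (Fin n) ℝ} (hM : ∀ i j, 0 ≤ M i j)
    (hN : ∀ i j, N i j ≤ N' i j) (i j : Fin n) : mtMul M N i j ≤ mtMul M N' i j := by
  obtain ⟨k, hk⟩ := exists_mtMul_eq M N i j
  rw [hk]
  exact (mul_le_mul_of_nonneg_left (hN k j) (hM i k)).trans (mul_le_mtMul M N' i k j)

theorem mtPow_nonneg {M : Matrix (Fin n) (Fin n) ℝ} (hM : ∀ i j, 0 ≤ M i j) :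
    ∀ (k : ℕ) (i j : Fin n), 0 ≤ mtPow M k i j
  | 0, i, j => one_nonneg_apply i j
  | k + 1, i, j => mtMul_nonneg hM (mtPow_nonneg hM k) i j

theorem mtChain_nonneg {A B : Matrix (Fin n) (Fin n) ℝ} (hA : ∀ i j, 0 ≤ A i j)
    (hB : ∀ i j, 0 ≤ B i j) :
    ∀ (k : ℕ) (v : Fin (k + 1) → ℕ) (i j : Fin n), 0 ≤ mtChain A B k v i j
  | 0, v, i, j => mtPow_nonneg hA (v 0) i j
  | k + 1, v, i, j => mtMul_nonneg (mtPow_nonneg hA (v 0))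
      (mtMul_nonneg hB (mtChain_nonneg hA hB k _)) i j

theorem mtPow_zero_self (M : Matrix (Fin n) (Fin n) ℝ) (i : Fin n) : mtPow M 0 i i = 1 :=
  Matrix.one_apply_eq i

theorem mtPow_mul_le {M : Matrix (Fin n) (Fin n) ℝ} (hM : ∀ i j, 0 ≤ M i j) (b : ℕ) :
    ∀ (a : ℕ) (i k j : Fin n), mtPow M a i k * mtPow M b k j ≤ mtPow M (a + b) i j
  | 0, i, k, j => by
      rw [Nat.zero_add]
      exact (mul_le_mtMul 1 (mtPow M b) i k j).trans (mtMul_one_le (mtPow_nonneg hM b) i j)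
  | a + 1, i, k, j => by
      obtain ⟨l, hl⟩ := exists_mtMul_eq M (mtPow M a) i k
      have h1 := mtPow_mul_le hM b a l k j
      have h2 := mul_le_mtMul M (mtPow M (a + b)) i l j
      have h3 : mtPow M (a + 1) i k = M i l * mtPow M a l k := hl
      have h4 : mtPow M (a + 1 + b) = mtMul M (mtPow M (a + b)) := by
        rw [show a + 1 + b = (a + b) + 1 by ring]; rfl
      rw [h3, h4, mul_assoc]
      exact (mul_le_mul_of_nonneg_left h1 (hM i l)).trans h2

theorem le_mtPow_one {M : Matrix (Fin n) (Fin n) ℝ} (i j : Fin n) :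
    M i j ≤ mtPow M 1 i j := by
  have := mul_le_mtMul M 1 i j j
  rwa [Matrix.one_apply_eq, mul_one] at this

/-- The finiteness of the index type makes the supremum defining `mtF` a genuine maximum. -/
theorem finite_tuples (k m : ℕ) : Finite { v : Fin (k + 1) → ℕ // ∑ t, v t = m } := by
  refine Set.Finite.to_subtype (s := {v : Fin (k + 1) → ℕ | ∑ t, v t = m}) ?_
  refine (Finset.finite_toSet (Finset.Nat.antidiagonalTuple (k + 1) m)).subset fun v hv => ?_
  exact Finset.Nat.mem_antidiagonalTuple.2 hv

theorem nonempty_tuples (k m : ℕ) : Nonempty { v : Fin (k + 1) → ℕ // ∑ t, v t = m } :=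
  ⟨⟨Fin.cons m 0, by simp [Fin.sum_univ_succ]⟩⟩

theorem mtF_le_iff (A B : Matrix (Fin n) (Fin n) ℝ) (k m : ℕ) (i j : Fin n) (c : ℝ) :
    mtF A B k m i j ≤ c ↔
      ∀ v : Fin (k + 1) → ℕ, ∑ t, v t = m → mtChain A B k v i j ≤ c := by
  have := finite_tuples k m
  have := nonempty_tuples k m
  exact (fin_iSup_le_iff _ c).trans Subtype.forall

theorem mtF_nonneg {A B : Matrix (Fin n) (Fin n) ℝ} (hA : ∀ i j, 0 ≤ A i j)
    (hB : ∀ i j, 0 ≤ B i j) (k m : ℕ) (i j : Fin n) : 0 ≤ mtF A B k m i j :=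
  Real.iSup_nonneg fun v => mtChain_nonneg hA hB k v.1 i j

theorem mtChain_zero_le {A B : Matrix (Fin n) (Fin n) ℝ} (hA : ∀ i j, 0 ≤ A i j)
    (hB : ∀ i j, 0 ≤ B i j) :
    ∀ (k : ℕ) (v : Fin (k + 1) → ℕ), (∀ t, v t = 0) →
      ∀ i j, mtChain A B k v i j ≤ mtPow B k i j
  | 0, v, hv, i, j => by rw [mtChain, hv 0]; rfl
  | k + 1, v, hv, i, j => by
      rw [mtChain, hv 0]
      exact (mtMul_one_le (mtMul_nonneg hB (mtChain_nonneg hA hB k _)) i j).trans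
        (mtMul_mono hB (mtChain_zero_le hA hB k _ fun t => hv t.succ) i j)

theorem mtF_zero_right_le {A B : Matrix (Fin n) (Fin n) ℝ} (hA : ∀ i j, 0 ≤ A i j)
    (hB : ∀ i j, 0 ≤ B i j) (k : ℕ) (i j : Fin n) : mtF A B k 0 i j ≤ mtPow B k i j := by
  rw [mtF_le_iff]
  intro v hv
  refine mtChain_zero_le hA hB k v (fun t => ?_) i j
  simpa using (Finset.sum_eq_zero_iff.1 hv) t (Finset.mem_univ t)

theorem mtF_zero_left_le (A B : Matrix (Fin n) (Fin n) ℝ) (m : ℕ) (i j : Fin n) :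
    mtF A B 0 m i j ≤ mtPow A m i j := by
  rw [mtF_le_iff]
  intro v hv
  have : v 0 = m := by simpa using hv
  rw [mtChain, this]

/-! ### Subeigenvectors bound every product -/

theorem mtMul_sub {M N : Matrix (Fin n) (Fin n) ℝ} {x : Fin n → ℝ} {c d : ℝ}
    (hM0 : ∀ i j, 0 ≤ M i j) (hd : 0 ≤ d)
    (hM : ∀ i j, M i j * x j ≤ c * x i) (hN : ∀ i j, N i j * x j ≤ d * x i) (i j : Fin n) :
    mtMul M N i j * x j ≤ c * d * x i := by
  obtain ⟨k, hk⟩ := exists_mtMul_eq M N i j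
  have h1 := mul_le_mul_of_nonneg_left (hN k j) (hM0 i k)
  have h2 := mul_le_mul_of_nonneg_left (hM i k) hd
  rw [hk]
  linarith

theorem mtPow_sub {M : Matrix (Fin n) (Fin n) ℝ} {x : Fin n → ℝ} {c : ℝ}
    (hM0 : ∀ i j, 0 ≤ M i j) (hc : 0 ≤ c) (hx : ∀ i, 0 < x i)
    (hM : ∀ i j, M i j * x j ≤ c * x i) :
    ∀ (k : ℕ) (i j : Fin n), mtPow M k i j * x j ≤ c ^ k * x i
  | 0, i, j => by
      simp only [mtPow, Matrix.one_apply, pow_zero, one_mul]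
      split_ifs with h
      · rw [h, one_mul]
      · rw [zero_mul]; exact (hx i).le
  | k + 1, i, j => by
      rw [pow_succ']
      exact mtMul_sub hM0 (pow_nonneg hc k) hM (mtPow_sub hM0 hc hx hM k) i j

theorem mtChain_sub {A B : Matrix (Fin n) (Fin n) ℝ} {x : Fin n → ℝ} {α β : ℝ}
    (hA0 : ∀ i j, 0 ≤ A i j) (hB0 : ∀ i j, 0 ≤ B i j) (hα : 0 ≤ α) (hβ : 0 ≤ β)
    (hx : ∀ i, 0 < x i) (hA : ∀ i j, A i j * x j ≤ α * x i)
    (hB : ∀ i j, B i j * x j ≤ β * x i) :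
    ∀ (k : ℕ) (v : Fin (k + 1) → ℕ) (i j : Fin n),
      mtChain A B k v i j * x j ≤ α ^ (∑ t, v t) * β ^ k * x i
  | 0, v, i, j => by simpa [mtChain] using mtPow_sub hA0 hα hx hA (v 0) i j
  | k + 1, v, i, j => by
      have h := mtMul_sub (mtPow_nonneg hA0 (v 0)) (by positivity)
        (mtPow_sub hA0 hα hx hA (v 0))
        (mtMul_sub hB0 (by positivity) hB
          (mtChain_sub hA0 hB0 hα hβ hx hA hB k fun t => v t.succ)) i j
      rw [Fin.sum_univ_succ, pow_add, pow_succ']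
      rw [mtChain]
      refine h.trans_eq ?_
      ring

theorem mtF_sub {A B : Matrix (Fin n) (Fin n) ℝ} {x : Fin n → ℝ} {α β : ℝ}
    (hA0 : ∀ i j, 0 ≤ A i j) (hB0 : ∀ i j, 0 ≤ B i j) (hα : 0 ≤ α) (hβ : 0 ≤ β)
    (hx : ∀ i, 0 < x i) (hA : ∀ i j, A i j * x j ≤ α * x i)
    (hB : ∀ i j, B i j * x j ≤ β * x i) (k m : ℕ) (i j : Fin n) :
    mtF A B k m i j * x j ≤ α ^ m * β ^ k * x i := by
  rw [← le_div_iff₀ (hx j), mtF_le_iff]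
  rintro v rfl
  rw [le_div_iff₀ (hx j)]
  exact mtChain_sub hA0 hB0 hα hβ hx hA hB k v i j

/-! ### Deleting cycles from a walk -/

/-- A max-times power is the weight of some walk `p 0, p 1, …, p L`. -/
theorem exists_walk (C : Matrix (Fin n) (Fin n) ℝ) (hC : ∀ i j, 0 ≤ C i j) (L : ℕ) :
    ∀ i j, 0 < mtPow C L i j → ∃ p : ℕ → Fin n, p 0 = i ∧ p L = j ∧
      mtPow C L i j = ∏ t ∈ Finset.range L, C (p t) (p (t + 1)) := by
  induction L with
  | zero =>
    intro i j h
    have hij : i = j := by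
      by_contra hne
      simp [mtPow, hne] at h
    exact ⟨fun _ => i, rfl, hij, hij ▸ mtPow_zero_self C i⟩
  | succ L ih =>
    intro i j h
    obtain ⟨k, hk⟩ := exists_mtMul_eq C (mtPow C L) i j
    have hk' : mtPow C (L + 1) i j = C i k * mtPow C L k j := hk
    have hpos : 0 < mtPow C L k j := by
      refine lt_of_le_of_ne (mtPow_nonneg hC L k j) fun h0 => ?_
      rw [hk', ← h0, mul_zero] at h
      exact lt_irrefl _ h
    obtain ⟨p, hp0, hpL, hp⟩ := ih k j hpos
    refine ⟨fun t => Nat.casesOn t i p, rfl, hpL, ?_⟩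
    rw [Finset.prod_range_succ', hk', hp, mul_comm, ← hp0]
    rfl

theorem prod_Ico_le_mtPow {C : Matrix (Fin n) (Fin n) ℝ} (hC : ∀ i j, 0 ≤ C i j)
    (p : ℕ → Fin n) (a : ℕ) : ∀ d : ℕ,
    ∏ t ∈ Finset.Ico a (a + d), C (p t) (p (t + 1)) ≤ mtPow C d (p a) (p (a + d))
  | 0 => by
      rw [Nat.add_zero, Finset.Ico_self, Finset.prod_empty, mtPow_zero_self]
  | d + 1 => by
      rw [← Nat.add_assoc, Finset.prod_Ico_succ_top (Nat.le_add_right a d)]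
      refine le_trans ?_ (mtPow_mul_le hC 1 d (p a) (p (a + d)) (p (a + d + 1)))
      exact mul_le_mul (prod_Ico_le_mtPow hC p a d) (le_mtPow_one _ _) (hC _ _)
        (mtPow_nonneg hC _ _ _)

/-- If every cycle of length at most `n` has weight at most `1`, an entry of a power `L ≥ n` is
dominated by that of a smaller power: a heaviest walk of length `L` repeats a vertex, and the cycle
in between can be deleted. -/
theorem exists_shorter {C : Matrix (Fin n) (Fin n) ℝ} (hC : ∀ i j, 0 ≤ C i j)
    (hcyc : ∀ L, 1 ≤ L → L ≤ n → ∀ i, mtPow C L i i ≤ 1) (L : ℕ) (hL : n ≤ L)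
    (i j : Fin n) : ∃ L' < L, mtPow C L i j ≤ mtPow C L' i j := by
  have hn : 0 < n := Fin.pos i
  rcases (mtPow_nonneg hC L i j).eq_or_lt with h0 | hpos
  · exact ⟨0, by omega, h0 ▸ mtPow_nonneg hC 0 i j⟩
  obtain ⟨p, rfl, rfl, hp⟩ := exists_walk C hC L i j hpos
  -- Pigeonhole on the first `n + 1` vertices, so that the cycle found has length at most `n`.
  obtain ⟨a, b, hab, hb, hpab⟩ : ∃ a b, a < b ∧ b ≤ n ∧ p a = p b := by
    obtain ⟨a, ha, b, hb, hne, he⟩ := Finset.exists_ne_map_eq_of_card_lt_of_maps_to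
      (s := Finset.range (n + 1)) (t := (Finset.univ : Finset (Fin n))) (f := p)
      (by simp) (fun _ _ => Finset.mem_coe.2 (Finset.mem_univ _))
    rw [Finset.mem_range] at ha hb
    rcases lt_or_gt_of_ne hne with h | h
    · exact ⟨a, b, h, by omega, he⟩
    · exact ⟨b, a, h, by omega, he.symm⟩
  obtain ⟨d, rfl⟩ := Nat.exists_eq_add_of_lt hab
  obtain ⟨e, rfl⟩ := Nat.exists_eq_add_of_le (hb.trans hL)
  refine ⟨a + e, by omega, ?_⟩
  refine le_trans ?_ (mtPow_mul_le hC e a (p 0) (p a) _)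
  have h1 := prod_Ico_le_mtPow hC p 0 a
  have h2 := prod_Ico_le_mtPow hC p a (d + 1)
  have h3 := prod_Ico_le_mtPow hC p (a + d + 1) e
  have h4 := hcyc (d + 1) (by omega) (by omega) (p a)
  rw [Nat.zero_add] at h1
  rw [← Nat.add_assoc, ← hpab] at h2
  rw [← hpab] at h3
  rw [hp, Finset.range_eq_Ico,
    ← Finset.prod_Ico_consecutive _ (Nat.zero_le (a + d + 1)) (Nat.le_add_right _ e),
    ← Finset.prod_Ico_consecutive _ (Nat.zero_le a) (show a ≤ a + d + 1 by omega)]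
  have hP : ∀ u w, 0 ≤ ∏ t ∈ Finset.Ico u w, C (p t) (p (t + 1)) :=
    fun u w => Finset.prod_nonneg fun t _ => hC _ _
  refine mul_le_mul ?_ h3 (hP _ _) (mtPow_nonneg hC _ _ _)
  exact (mul_le_mul h1 (h2.trans h4) (hP _ _) (mtPow_nonneg hC _ _ _)).trans_eq (mul_one _)

theorem exists_short {C : Matrix (Fin n) (Fin n) ℝ} (hC : ∀ i j, 0 ≤ C i j)
    (hcyc : ∀ L, 1 ≤ L → L ≤ n → ∀ i, mtPow C L i i ≤ 1) (i j : Fin n) (L : ℕ) :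
    ∃ L' < n, mtPow C L i j ≤ mtPow C L' i j := by
  induction L using Nat.strong_induction_on with
  | _ L ih =>
    rcases lt_or_ge L n with h | h
    · exact ⟨L, h, le_rfl⟩
    · obtain ⟨L', hL', h1⟩ := exists_shorter hC hcyc L h i j
      obtain ⟨L'', hL'', h2⟩ := ih L' hL'
      exact ⟨L'', hL'', h1.trans h2⟩

/-- Feasibility for a single matrix `C` with bound `1`. The solution is the greatest one,
`x j = (max_{i, L < n} C^{⊗L} i j / h i)⁻¹`; the maximum is positive since `L = 0` contributes
`1 / h j`, so the inverse is genuine. -/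
theorem exists_subeigenvector {C : Matrix (Fin n) (Fin n) ℝ} {g h : Fin n → ℝ}
    (hC : ∀ i j, 0 ≤ C i j) (hh : ∀ i, 0 < h i)
    (hcyc : ∀ L, 1 ≤ L → L ≤ n → ∀ i, mtPow C L i i ≤ 1)
    (hbd : ∀ L < n, ∀ i j, mtPow C L i j * g j ≤ h i) :
    ∃ x : Fin n → ℝ, (∀ i, 0 < x i) ∧ (∀ i, g i ≤ x i) ∧ (∀ i, x i ≤ h i) ∧
      ∀ i j, C i j * x j ≤ x i := by
  let q : Fin n → ℝ := fun j => ⨆ p : Fin n × Fin n, mtPow C p.2 p.1 j / h p.1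
  have hle : ∀ L < n, ∀ i j, mtPow C L i j / h i ≤ q j := fun L hL i j =>
    le_fin_iSup (fun p : Fin n × Fin n => mtPow C p.2 p.1 j / h p.1) (i, ⟨L, hL⟩)
  have hq_h : ∀ j, 1 / h j ≤ q j := fun j => by
    have := hle 0 (Fin.pos j) j j
    simpa [mtPow] using this
  have hq : ∀ j, 0 < q j := fun j => (one_div_pos.2 (hh j)).trans_le (hq_h j)
  have hmem : ∀ j, ∃ L < n, ∃ i, q j = mtPow C L i j / h i := fun j => by
    have : Nonempty (Fin n × Fin n) := ⟨(j, j)⟩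
    obtain ⟨p, hp⟩ := exists_eq_ciSup_of_finite
      (f := fun p : Fin n × Fin n => mtPow C p.2 p.1 j / h p.1)
    exact ⟨p.2, p.2.2, p.1, hp.symm⟩
  refine ⟨fun j => 1 / q j, fun j => one_div_pos.2 (hq j), fun j => ?_, fun j => ?_,
    fun i j => ?_⟩
  · obtain ⟨L, hL, i, hi⟩ := hmem j
    rw [le_div_iff₀ (hq j), hi, mul_div_assoc', div_le_one (hh i), mul_comm]
    exact hbd L hL i j
  · rw [div_le_iff₀ (hq j), ← div_le_iff₀' (hh j)]
    exact hq_h j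
  · have key : q i * C i j ≤ q j := by
      obtain ⟨L, hL, l, hl⟩ := hmem i
      obtain ⟨L', hL', h'⟩ := exists_short hC hcyc l j (L + 1)
      have h1 := mtPow_mul_le hC 1 L l i j
      have h2 := mul_le_mul_of_nonneg_left (le_mtPow_one (M := C) i j) (mtPow_nonneg hC L l i)
      rw [hl, div_mul_eq_mul_div]
      exact (div_le_div_of_nonneg_right (h2.trans (h1.trans h')) (hh l).le).trans
        (hle L' hL' l j)
    rw [mul_one_div, div_le_div_iff₀ (hq j) (hq i), one_mul, mul_comm]
    exact key

/-! ### Expanding powers of the combined matrix -/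

/-- A power of `max (A / α) (B / β)` expands into products of `A`'s and `B`'s: every entry is
dominated by that of one suitably scaled chain of the same total length. -/
theorem exists_chain {A B : Matrix (Fin n) (Fin n) ℝ} {α β : ℝ} (hα : 0 < α) (hβ : 0 < β)
    (hA : ∀ i j, 0 ≤ A i j) (hB : ∀ i j, 0 ≤ B i j) (j : Fin n) :
    ∀ (L : ℕ) (i : Fin n), ∃ (k : ℕ) (v : Fin (k + 1) → ℕ), k + ∑ t, v t = L ∧
      mtPow (fun i j => max (A i j / α) (B i j / β)) L i j * (α ^ (∑ t, v t) * β ^ k) ≤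
        mtChain A B k v i j
  | 0, i => ⟨0, 0, by simp, by simp [mtPow, mtChain]⟩
  | L + 1, i => by
      set C : Matrix (Fin n) (Fin n) ℝ := fun i j => max (A i j / α) (B i j / β) with hC
      obtain ⟨l, hl⟩ := exists_mtMul_eq C (mtPow C L) i j
      have hl' : mtPow C (L + 1) i j = C i l * mtPow C L l j := hl
      obtain ⟨k, v, hkv, hv⟩ := exists_chain hα hβ hA hB j L l
      rw [← hC] at hv
      rcases max_choice (A i l / α) (B i l / β) with hm | hm
      · refine ⟨k, Fin.cons (v 0 + 1) (fun t => v t.succ), ?_, ?_⟩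
        · rw [Fin.sum_univ_succ] at hkv ⊢
          simp only [Fin.cons_zero, Fin.cons_succ]
          omega
        have hs : ∑ t, (Fin.cons (v 0 + 1) (fun t => v t.succ) : Fin (k + 1) → ℕ) t =
            (∑ t, v t) + 1 := by
          rw [Fin.sum_univ_succ, Fin.sum_univ_succ v]
          simp only [Fin.cons_zero, Fin.cons_succ]
          omega
        have hstep : A i l * mtChain A B k v l j ≤
            mtChain A B k (Fin.cons (v 0 + 1) (fun t => v t.succ)) i j := by
          cases k with
          | zero => exact mul_le_mtMul A (mtPow A (v 0)) i l j
          | succ k =>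
            obtain ⟨s, hs⟩ := exists_mtMul_eq (mtPow A (v 0))
              (mtMul B (mtChain A B k fun t => v t.succ)) l j
            have h1 := mul_le_mtMul A (mtPow A (v 0)) i l s
            have h2 := mul_le_mtMul (mtPow A (v 0 + 1))
              (mtMul B (mtChain A B k fun t => v t.succ)) i s j
            have h3 := mtMul_nonneg hB (mtChain_nonneg hA hB k fun t => v t.succ) s j
            rw [mtChain, hs, ← mul_assoc]
            exact (mul_le_mul_of_nonneg_right h1 h3).trans h2
        rw [hs]
        refine le_trans (le_of_eq ?_) ((mul_le_mul_of_nonneg_left hv (hA i l)).trans hstep)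
        rw [hl', show C i l = A i l / α from hm]
        ring_nf
        field_simp
      · refine ⟨k + 1, Fin.cons 0 v, ?_, ?_⟩
        · rw [Fin.sum_univ_succ]
          simp only [Fin.cons_zero, Fin.cons_succ]
          omega
        have hs : ∑ t, (Fin.cons 0 v : Fin (k + 1 + 1) → ℕ) t = ∑ t, v t := by
          rw [Fin.sum_univ_succ]
          simp only [Fin.cons_zero, Fin.cons_succ]
          omega
        have hstep : B i l * mtChain A B k v l j ≤ mtChain A B (k + 1) (Fin.cons 0 v) i j := by
          refine (mul_le_mtMul B (mtChain A B k v) i l j).trans ?_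
          have := mul_le_mtMul 1 (mtMul B (mtChain A B k v)) i i j
          rw [Matrix.one_apply_eq, one_mul] at this
          exact this
        rw [hs]
        refine le_trans (le_of_eq ?_) ((mul_le_mul_of_nonneg_left hv (hB i l)).trans hstep)
        rw [hl', show C i l = B i l / β from hm]
        ring_nf
        field_simp

/-! ### Reading the scalar bounds entrywise -/

theorem biSup_le_iff_of_nonneg (s : Finset ℕ) (f : ℕ → ℝ) (c : ℝ) (hc : 0 ≤ c)
    (hf : ∀ k, 0 ≤ f k) : (⨆ k ∈ s, f k) ≤ c ↔ ∀ k ∈ s, f k ≤ c := by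
  constructor
  · intro h k hk
    have hb : BddAbove (Set.range fun k => ⨆ _ : k ∈ s, f k) := by
      refine ⟨∑ k ∈ s, f k, ?_⟩
      rintro _ ⟨l, rfl⟩
      refine Real.iSup_le (fun hl => ?_) (Finset.sum_nonneg fun k _ => hf k)
      exact Finset.single_le_sum (fun k _ => hf k) hl
    have := le_ciSup hb k
    simp only [hk, ciSup_unique] at this
    exact this.trans h
  · intro h
    exact Real.iSup_le (fun k => Real.iSup_le (fun hk => h k hk) hc) hc

theorem biSup_nonneg (s : Finset ℕ) (f : ℕ → ℝ) (hf : ∀ k, 0 ≤ f k) : 0 ≤ ⨆ k ∈ s, f k :=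
  Real.iSup_nonneg fun k => Real.iSup_nonneg fun _ => hf k

theorem root_le_iff {T c : ℝ} (hT : 0 ≤ T) (hc : 0 ≤ c) {k : ℕ} (hk : 1 ≤ k) :
    T ^ (1 / (k : ℝ)) ≤ c ↔ T ≤ c ^ k := by
  have hk' : (0 : ℝ) < k := by exact_mod_cast hk
  rw [one_div, Real.rpow_inv_le_iff_of_pos hT hc hk', Real.rpow_natCast]

theorem scaled_root_le_iff {T c s : ℝ} (hT : 0 ≤ T) (hc : 0 ≤ c) (hs : 0 < s) {k : ℕ}
    (hk : 1 ≤ k) (m : ℕ) :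
    s ^ (-(m : ℝ) / (k : ℝ)) * T ^ (1 / (k : ℝ)) ≤ c ↔ T ≤ s ^ m * c ^ k := by
  have hk' : (k : ℝ) ≠ 0 := by positivity
  have h1 : s ^ (-(m : ℝ) / (k : ℝ)) = ((s ^ m)⁻¹) ^ (1 / (k : ℝ)) := by
    rw [← Real.rpow_natCast s m, ← Real.rpow_neg hs.le, ← Real.rpow_mul hs.le]
    congr 1
    ring
  have hsm : 0 < s ^ m := pow_pos hs m
  rw [h1, ← Real.mul_rpow (by positivity) hT, root_le_iff (by positivity) hc hk,
    inv_mul_le_iff₀ hsm]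

theorem mtTrace_le_iff [Nonempty (Fin n)] (M : Matrix (Fin n) (Fin n) ℝ) (c : ℝ) :
    mtTrace M ≤ c ↔ ∀ i, M i i ≤ c :=
  fin_iSup_le_iff _ c

theorem mtTrace_nonneg {M : Matrix (Fin n) (Fin n) ℝ} (hM : ∀ i j, 0 ≤ M i j) :
    0 ≤ mtTrace M :=
  Real.iSup_nonneg fun i => hM i i

theorem iSup_div_le_iff [Nonempty (Fin n)] {h g : Fin n → ℝ} (hh : ∀ i, 0 < h i)
    (M : Matrix (Fin n) (Fin n) ℝ) (c : ℝ) :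
    (⨆ i, ⨆ j, M i j * g j / h i) ≤ c ↔ ∀ i j, M i j * g j ≤ c * h i := by
  simp only [fin_iSup_le_iff, div_le_iff₀ (hh _)]

theorem mtHMG_nonneg {M : Matrix (Fin n) (Fin n) ℝ} {h g : Fin n → ℝ} (hh : ∀ i, 0 < h i)
    (hg : ∀ i, 0 ≤ g i) (hM : ∀ i j, 0 ≤ M i j) : 0 ≤ mtHMG h M g :=
  Real.iSup_nonneg fun i => Real.iSup_nonneg fun j =>
    div_nonneg (mul_nonneg (hM i j) (hg j)) (hh i).le

theorem mtSpecR_le_iff [Nonempty (Fin n)] {M : Matrix (Fin n) (Fin n) ℝ} {c : ℝ}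
    (hM : ∀ i j, 0 ≤ M i j) (hc : 0 ≤ c) :
    mtSpecR M ≤ c ↔ ∀ k, 1 ≤ k → k ≤ n → ∀ i, mtPow M k i i ≤ c ^ k := by
  have h0 := fun k => mtTrace_nonneg (mtPow_nonneg hM k)
  rw [mtSpecR, biSup_le_iff_of_nonneg _ _ _ hc fun k => Real.rpow_nonneg (h0 k) _]
  simp only [Finset.mem_Icc, and_imp]
  refine forall_congr' fun k => forall_congr' fun hk => ?_
  rw [root_le_iff (h0 k) hc hk, mtTrace_le_iff]

theorem mtBnd_le_iff [Nonempty (Fin n)] {M : Matrix (Fin n) (Fin n) ℝ} {c : ℝ}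
    {h g : Fin n → ℝ} (hh : ∀ i, 0 < h i) (hg : ∀ i, 0 ≤ g i)
    (hM : ∀ i j, 0 ≤ M i j) (hc : 0 ≤ c) :
    mtBnd h M g ≤ c ↔
      ∀ k, 1 ≤ k → k ≤ n - 1 → ∀ i j, mtPow M k i j * g j ≤ c ^ k * h i := by
  have h0 := fun k => mtHMG_nonneg hh hg (mtPow_nonneg hM k)
  rw [mtBnd, biSup_le_iff_of_nonneg _ _ _ hc fun k => Real.rpow_nonneg (h0 k) _]
  simp only [Finset.mem_Icc, and_imp]
  refine forall_congr' fun k => forall_congr' fun hk => ?_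
  rw [root_le_iff (h0 k) hc hk, mtHMG, iSup_div_le_iff hh]

/-- Common form of the two double maxima in `mtG`, with `T k m` standing for either scalar. -/
theorem biSup_biSup_le_iff {s c : ℝ} (hs : 0 < s) (hc : 0 ≤ c) (T : ℕ → ℕ → ℝ)
    (hT : ∀ k m, 0 ≤ T k m) (a : ℕ) (b : ℕ → ℕ) :
    (⨆ k ∈ Finset.Icc 1 a, ⨆ m ∈ Finset.Icc 1 (b k),
        s ^ (-(m : ℝ) / (k : ℝ)) * (T k m) ^ (1 / (k : ℝ))) ≤ c ↔
      ∀ k m, 1 ≤ k → k ≤ a → 1 ≤ m → m ≤ b k → T k m ≤ s ^ m * c ^ k := by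
  have h0 : ∀ k m : ℕ, 0 ≤ s ^ (-(m : ℝ) / (k : ℝ)) * (T k m) ^ (1 / (k : ℝ)) := fun k m =>
    mul_nonneg (Real.rpow_nonneg hs.le _) (Real.rpow_nonneg (hT k m) _)
  rw [biSup_le_iff_of_nonneg _ _ _ hc fun k => biSup_nonneg _ _ (h0 k)]
  constructor
  · intro H k m hk hka hm hmb
    have := (biSup_le_iff_of_nonneg _ _ _ hc (h0 k)).1 (H k (Finset.mem_Icc.2 ⟨hk, hka⟩)) m
      (Finset.mem_Icc.2 ⟨hm, hmb⟩)
    exact (scaled_root_le_iff (hT k m) hc hs hk m).1 this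
  · intro H k hk
    rw [Finset.mem_Icc] at hk
    rw [biSup_le_iff_of_nonneg _ _ _ hc (h0 k)]
    intro m hm
    rw [Finset.mem_Icc] at hm
    exact (scaled_root_le_iff (hT k m) hc hs hk.1 m).2 (H k m hk.1 hk.2 hm.1 hm.2)

theorem mtG_le_iff [Nonempty (Fin n)] {A B : Matrix (Fin n) (Fin n) ℝ} {s c : ℝ}
    {h g : Fin n → ℝ} (hh : ∀ i, 0 < h i) (hg : ∀ i, 0 ≤ g i)
    (hA : ∀ i j, 0 ≤ A i j) (hB : ∀ i j, 0 ≤ B i j) (hs : 0 < s) (hc : 0 ≤ c) :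
    mtG A B h g s ≤ c ↔
      (∀ k m, 1 ≤ k → k ≤ n - 1 → 1 ≤ m → m ≤ n - k →
        ∀ i, mtF A B k m i i ≤ s ^ m * c ^ k) ∧
      (∀ k m, 1 ≤ k → k ≤ n - 2 → 1 ≤ m → m ≤ n - k - 1 →
        ∀ i j, mtF A B k m i j * g j ≤ s ^ m * c ^ k * h i) := by
  rw [mtG, max_le_iff,
    biSup_biSup_le_iff hs hc (fun k m => mtTrace (mtF A B k m))
      (fun k m => mtTrace_nonneg (mtF_nonneg hA hB k m)) (n - 1) (fun k => n - k),
    biSup_biSup_le_iff hs hc (fun k m => mtHMG h (mtF A B k m) g)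
      (fun k m => mtHMG_nonneg hh hg (mtF_nonneg hA hB k m)) (n - 2) (fun k => n - k - 1)]
  simp only [mtTrace_le_iff, mtHMG, iSup_div_le_iff hh]

end MaxTimes

/-- Feasibility criterion: there is a positive vector `x` with `g ≤ x ≤ h`,
`max_{i,j} A i j * x j / x i ≤ α` and `max_{i,j} B i j * x j / x i ≤ β`
iff `α ≥ max(λ, γ)` and `β ≥ max(μ, δ, G(α))`. -/
theorem feasible_iff {n : ℕ} (A B : Matrix (Fin n) (Fin n) ℝ)
    (hA : ∀ i j, 0 ≤ A i j) (hB : ∀ i j, 0 ≤ B i j)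
    (hA0 : ∃ i j, 0 < A i j) (hB0 : ∃ i j, 0 < B i j)
    (g h : Fin n → ℝ) (hg : ∀ i, 0 ≤ g i) (hh : ∀ i, 0 < h i) (hgh : ∀ i, g i ≤ h i)
    (α β : ℝ) (hα : 0 < α) (hβ : 0 < β) :
    (∃ x : Fin n → ℝ, (∀ i, 0 < x i) ∧ (∀ i, g i ≤ x i) ∧ (∀ i, x i ≤ h i) ∧
        (⨆ i, ⨆ j, A i j * x j / x i) ≤ α ∧ (⨆ i, ⨆ j, B i j * x j / x i) ≤ β) ↔
      (max (mtSpecR A) (mtBnd h A g) ≤ α ∧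
        max (mtSpecR B) (max (mtBnd h B g) (mtG A B h g α)) ≤ β) := by
  have : Nonempty (Fin n) := let ⟨i, _⟩ := hA0; ⟨i⟩
  rw [max_le_iff, max_le_iff, max_le_iff, mtSpecR_le_iff hA hα.le, mtSpecR_le_iff hB hβ.le,
    mtBnd_le_iff hh hg hA hα.le, mtBnd_le_iff hh hg hB hβ.le, mtG_le_iff hh hg hA hB hα hβ.le]
  constructor
  · rintro ⟨x, hx, hgx, hxh, hAx, hBx⟩
    rw [iSup_div_le_iff hx] at hAx hBx
    have diag : ∀ (M : Matrix (Fin n) (Fin n) ℝ) (c : ℝ),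
        (∀ i j, M i j * x j ≤ c * x i) → ∀ i, M i i ≤ c := fun M c H i =>
      le_of_mul_le_mul_right (H i i) (hx i)
    have bd : ∀ (M : Matrix (Fin n) (Fin n) ℝ) (c : ℝ), (∀ i j, 0 ≤ M i j) → 0 ≤ c →
        (∀ i j, M i j * x j ≤ c * x i) → ∀ i j, M i j * g j ≤ c * h i :=
      fun M c hM hc H i j => (mul_le_mul_of_nonneg_left (hgx j) (hM i j)).trans
        ((H i j).trans (mul_le_mul_of_nonneg_left (hxh i) hc))
    have hF := mtF_sub hA hB hα.le hβ.le hx hAx hBx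
    exact ⟨⟨fun k _ _ => diag _ _ (mtPow_sub hA hα.le hx hAx k),
        fun k _ _ => bd _ _ (mtPow_nonneg hA k) (by positivity) (mtPow_sub hA hα.le hx hAx k)⟩,
      fun k _ _ => diag _ _ (mtPow_sub hB hβ.le hx hBx k),
      fun k _ _ => bd _ _ (mtPow_nonneg hB k) (by positivity) (mtPow_sub hB hβ.le hx hBx k),
      fun k m _ _ _ _ => diag _ _ (hF k m),
      fun k m _ _ _ _ => bd _ _ (mtF_nonneg hA hB k m) (by positivity) (hF k m)⟩
  · rintro ⟨⟨hA1, hA2⟩, hB1, hB2, hG1, hG2⟩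
    have hT : ∀ k m, 1 ≤ k + m → k + m ≤ n → ∀ i, mtF A B k m i i ≤ α ^ m * β ^ k := by
      intro k m h1 h2 i
      rcases Nat.eq_zero_or_pos k with rfl | hk
      · rw [pow_zero, mul_one]
        exact (mtF_zero_left_le A B m i i).trans (hA1 m (by omega) (by omega) i)
      rcases Nat.eq_zero_or_pos m with rfl | hm
      · rw [pow_zero, one_mul]
        exact (mtF_zero_right_le hA hB k i i).trans (hB1 k hk (by omega) i)
      · exact hG1 k m hk (by omega) hm (by omega) i
    have hH : ∀ k m, k + m < n → ∀ i j, mtF A B k m i j * g j ≤ α ^ m * β ^ k * h i := by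
      intro k m h2 i j
      rcases Nat.eq_zero_or_pos k with rfl | hk
      · rw [pow_zero, mul_one]
        refine (mul_le_mul_of_nonneg_right (mtF_zero_left_le A B m i j) (hg j)).trans ?_
        rcases Nat.eq_zero_or_pos m with rfl | hm
        · -- The empty product only needs `g ≤ h`.
          simp only [mtPow, Matrix.one_apply, pow_zero, one_mul]
          split_ifs with hij
          · rw [one_mul, ← hij]; exact hgh i
          · rw [zero_mul]; exact (hh i).le
        · exact hA2 m hm (by omega) i j
      rcases Nat.eq_zero_or_pos m with rfl | hm
      · rw [pow_zero, one_mul]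
        exact (mul_le_mul_of_nonneg_right (mtF_zero_right_le hA hB k i j) (hg j)).trans
          (hB2 k hk (by omega) i j)
      · exact hG2 k m hk (by omega) hm (by omega) i j
    have hC : ∀ i j, 0 ≤ (fun i j => max (A i j / α) (B i j / β) :
        Matrix (Fin n) (Fin n) ℝ) i j :=
      fun i j => le_max_of_le_left (div_nonneg (hA i j) hα.le)
    have hexp := exists_chain hα hβ hA hB
    generalize hCdef : (fun i j => max (A i j / α) (B i j / β) :
      Matrix (Fin n) (Fin n) ℝ) = C at hC hexp
    have hF : ∀ L i j, ∃ k m, k + m = L ∧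
        mtPow C L i j * (α ^ m * β ^ k) ≤ mtF A B k m i j := fun L i j => by
      obtain ⟨k, v, hkv, hv⟩ := hexp j L i
      exact ⟨k, _, hkv, hv.trans ((mtF_le_iff A B k _ i j _).1 le_rfl v rfl)⟩
    obtain ⟨x, hx, hgx, hxh, hCx⟩ := exists_subeigenvector (g := g) hC hh
      (fun L h1 h2 i => by
        obtain ⟨k, m, rfl, hv⟩ := hF L i i
        have hp : 0 < α ^ m * β ^ k := by positivity
        have := hv.trans (hT k m h1 h2 i)
        exact le_of_mul_le_mul_right (this.trans_eq (one_mul _).symm) hp)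
      (fun L hL i j => by
        obtain ⟨k, m, rfl, hv⟩ := hF L i j
        have hp : 0 < α ^ m * β ^ k := by positivity
        have := (mul_le_mul_of_nonneg_right hv (hg j)).trans (hH k m hL i j)
        refine le_of_mul_le_mul_left ?_ hp
        linarith)
    refine ⟨x, hx, hgx, hxh, (iSup_div_le_iff hx A α).2 fun i j => ?_,
      (iSup_div_le_iff hx B β).2 fun i j => ?_⟩
    · have h1 : A i j / α ≤ C i j := hCdef ▸ le_max_left _ _
      have h2 := (mul_le_mul_of_nonneg_right h1 (hx j).le).trans (hCx i j)
      rwa [div_mul_eq_mul_div, div_le_iff₀' hα] at h2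
    · have h1 : B i j / β ≤ C i j := hCdef ▸ le_max_right _ _
      have h2 := (mul_le_mul_of_nonneg_right h1 (hx j).le).trans (hCx i j)
      rwa [div_mul_eq_mul_div, div_le_iff₀' hβ] at h2
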